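/- There is a constant c > 0 such that for every integer n ≥ 6 there exists a finite simple graph H_n with at most 4n vertices (and at least n vertices) which admits an IC-planar straight-line drawing, but such that every IC-planar straight-line grid drawing of H_n has bounding box of area at least c·n²; that is, if W and H denote the differences between the maximum and minimum x-coordinates, respectively y-coordinates, of the vertex images, then W·H ≥ c·n². Hence quadratic area is worst-case optimal for IC-planar straight-line grid drawings. -/

import Mathlib

/-- The open straight-line segment representing an edge (an unordered pair of
vertices) in a straight-line drawing `ρ`. -/
def edgeSeg {V : Type*} (ρ : V → ℝ × ℝ) : Sym2 V → Set (ℝ × ℝ) :=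
  Sym2.lift ⟨fun u v => openSegment ℝ (ρ u) (ρ v),
    fun u v => openSegment_symm ℝ (ρ u) (ρ v)⟩

/-- Two edges *cross* in the drawing `ρ`: they share no endpoint and
their open segments meet. -/
def Crosses {V : Type*} (ρ : V → ℝ × ℝ) (e f : Sym2 V) : Prop :=
  (∀ v : V, v ∈ e → v ∉ f) ∧ (edgeSeg ρ e ∩ edgeSeg ρ f).Nonempty

/-- `ρ` is a straight-line drawing of the simple graph `G`. -/
structure IsStraightLineDrawing {V : Type*} (G : SimpleGraph V) (ρ : V → ℝ × ℝ) : Prop where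
  inj : Function.Injective ρ
  no_vertex_on_edge : ∀ e ∈ G.edgeSet, ∀ v : V, v ∉ e → ρ v ∉ edgeSeg ρ e
  meet_at_most_once : ∀ e ∈ G.edgeSet, ∀ f ∈ G.edgeSet, (∀ v : V, v ∈ e → v ∉ f) →
    (edgeSeg ρ e ∩ edgeSeg ρ f).Subsingleton

/-- `ρ` is an IC-planar straight-line drawing of `G`: it is a straight-line drawing,
each edge crosses at most one other edge, and the crossed edges form a matching. -/
def IsICPlanarDrawing {V : Type*} (G : SimpleGraph V) (ρ : V → ℝ × ℝ) : Prop :=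
  IsStraightLineDrawing G ρ ∧
  (∀ e ∈ G.edgeSet, ∀ f ∈ G.edgeSet, ∀ g ∈ G.edgeSet,
    Crosses ρ e f → Crosses ρ e g → f = g) ∧
  (∀ e ∈ G.edgeSet, ∀ f ∈ G.edgeSet,
    (∃ e' ∈ G.edgeSet, Crosses ρ e e') → (∃ f' ∈ G.edgeSet, Crosses ρ f f') →
    e ≠ f → ∀ v : V, v ∈ e → v ∉ f)

/-- All vertices are placed at integer coordinates. -/
def IsGridDrawing {V : Type*} (ρ : V → ℝ × ℝ) : Prop :=
  ∀ v : V, ∃ a b : ℤ, ρ v = ((a : ℝ), (b : ℝ))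

/-- `ρ` is a RAC drawing of `G`: any two crossing edges are perpendicular. -/
def IsRACDrawing {V : Type*} (G : SimpleGraph V) (ρ : V → ℝ × ℝ) : Prop :=
  ∀ e ∈ G.edgeSet, ∀ f ∈ G.edgeSet, Crosses ρ e f →
    ∀ a b c d : V, e = s(a, b) → f = s(c, d) →
      ((ρ b).1 - (ρ a).1) * ((ρ d).1 - (ρ c).1)
        + ((ρ b).2 - (ρ a).2) * ((ρ d).2 - (ρ c).2) = 0

open Set Topology
open scoped Function

/-!
Suppose every edge of `G` is given an apex of its own. If two edges of `G` without a common
endpoint crossed in an IC-planar drawing, the matching condition would leave all other edges of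
their two triangles uncrossed; one edge would then enter the triangle over the other, its
triangle could not get out again, and yet its far end lies beyond the base. So an IC-planar drawing
of the larger graph restricts to a planar drawing of `G`.

Let `G` be the cube of a path. The vertices `i + 1, i + 2, i + 3` span a triangle with two common
neighbours `i` and `i + 4`, and in a planar drawing one of these lies inside it. Going from the
middle of the path towards one of its ends, every vertex hence lies inside the triangle of
the preceding three, and three such steps narrow the range of each integer coordinate at both sides.
Conversely, putting every vertex at the barycentre of the triangle of the preceding three gives a
planar drawing with room for all apexes.
-/

/-! ### Convex hulls and triangles -/

theorem subset_of_isPreconnected_of_disjoint_frontier {X : Type*} [TopologicalSpace X]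
    {s u : Set X} (hs : IsPreconnected s) (hu : IsOpen u) (hfr : Disjoint (frontier u) s)
    (hsu : (s ∩ u).Nonempty) : s ⊆ u := by
  have := isPreconnected_iff_preconnectedSpace.mp hs
  obtain ⟨x, hxs, hxu⟩ := hsu
  have huniv := (isClopen_preimage_val hu hfr).eq_univ ⟨⟨x, hxs⟩, hxu⟩
  exact fun y hy => huniv.ge (mem_univ (⟨y, hy⟩ : s))

section Convex

variable {E : Type*} [AddCommGroup E] [Module ℝ E] {a b c d p q : E}

theorem exists_nonneg_mul_le_and_mul_eq {ι : Type*} {s : Finset ι} {v w : ι → ℝ}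
    (hv : ∀ i ∈ s, 0 ≤ v i) (hw : ∀ i ∈ s, 0 ≤ w i) (hpos : ∃ i ∈ s, 0 < w i) :
    ∃ t, 0 ≤ t ∧ (∀ i ∈ s, t * w i ≤ v i) ∧ ∃ z ∈ s, t * w z = v z := by
  obtain ⟨a, has, ha⟩ := hpos
  obtain ⟨z, hz, hmin⟩ := (s.filter (0 < w ·)).exists_min_image (fun i => v i / w i)
    ⟨a, by simp [has, ha]⟩
  obtain ⟨hzs, hwz⟩ := Finset.mem_filter.mp hz
  refine ⟨v z / w z, div_nonneg (hv z hzs) hwz.le, fun i hi => ?_, z, hzs,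
    div_mul_cancel₀ _ hwz.ne'⟩
  rcases (hw i hi).eq_or_lt with h | h
  · simpa [← h] using hv i hi
  · exact (le_div_iff₀ h).1 <| hmin i <| by simp [hi, h]

/-- A Steinitz exchange: subtract from the weights of `x` the largest multiple of the weights of `y`
that leaves them nonnegative; the point whose weight vanishes is `z`. -/
theorem exists_mem_convexHull_insert_erase [DecidableEq E] {s : Finset E} {x y : E}
    (hx : x ∈ convexHull ℝ (s : Set E)) (hy : y ∈ convexHull ℝ (s : Set E)) :
    ∃ z ∈ s, x ∈ convexHull ℝ (insert y (s.erase z : Set E)) := by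
  rw [Finset.mem_convexHull'] at hx hy
  obtain ⟨v, hv₀, hv₁, rfl⟩ := hx
  obtain ⟨w, hw₀, hw₁, rfl⟩ := hy
  obtain ⟨t, ht₀, hle, z, hzs, hz⟩ := exists_nonneg_mul_le_and_mul_eq hv₀ hw₀
    (Finset.exists_lt_of_sum_lt (f := 0) (by simp [hw₁]))
  have hz₀ : v z - t * w z = 0 := sub_eq_zero.2 hz.symm
  let u : E → ℝ := fun i => if i = z then t else v i - t * w i
  let p : E → E := fun i => if i = z then ∑ i ∈ s, w i • i else i
  have hu : ∀ i ∈ s, 0 ≤ u i := fun i hi => by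
    dsimp only [u]
    split_ifs
    exacts [ht₀, sub_nonneg.2 (hle i hi)]
  have hu₁ : ∑ i ∈ s, u i = 1 := calc
    ∑ i ∈ s, u i = t + ∑ i ∈ s, (v i - t * w i) := by
      rw [← Finset.add_sum_erase s _ hzs, ← Finset.add_sum_erase s (fun i => v i - t * w i) hzs,
        hz₀, zero_add]
      exact congrArg₂ _ (if_pos rfl)
        (Finset.sum_congr rfl fun i hi => if_neg (Finset.ne_of_mem_erase hi))
    _ = 1 := by rw [Finset.sum_sub_distrib, ← Finset.mul_sum, hv₁, hw₁]; ring
  have hup : ∑ i ∈ s, u i • p i = ∑ i ∈ s, v i • i := calc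
    ∑ i ∈ s, u i • p i = t • ∑ i ∈ s, w i • i + ∑ i ∈ s, (v i - t * w i) • i := by
      rw [← Finset.add_sum_erase s _ hzs, ← Finset.add_sum_erase s (fun i => (_ - _) • i) hzs,
        hz₀, zero_smul, zero_add]
      refine congrArg₂ _ (by simp [u, p]) (Finset.sum_congr rfl fun i hi => ?_)
      simp [u, p, Finset.ne_of_mem_erase hi]
    _ = ∑ i ∈ s, v i • i := by
      rw [Finset.smul_sum, ← Finset.sum_add_distrib]
      exact Finset.sum_congr rfl fun i _ => by module
  refine ⟨z, hzs, hup ▸ (convex_convexHull ℝ _).sum_mem hu hu₁ fun i hi => subset_convexHull ℝ _ ?_⟩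
  dsimp only [p]
  split_ifs with h
  exacts [mem_insert _ _, mem_insert_of_mem _ (Finset.mem_erase.2 ⟨h, hi⟩)]

theorem radon_four_points [FiniteDimensional ℝ E] (hE : Module.finrank ℝ E ≤ 2) (a b c d : E) :
    d ∈ convexHull ℝ {a, b, c} ∨ c ∈ convexHull ℝ {a, b, d} ∨ b ∈ convexHull ℝ {a, c, d} ∨
      a ∈ convexHull ℝ {b, c, d} ∨ ¬Disjoint (segment ℝ a b) (segment ℝ c d) ∨
      ¬Disjoint (segment ℝ a c) (segment ℝ b d) ∨ ¬Disjoint (segment ℝ a d) (segment ℝ b c) := by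
  have hdep : ¬AffineIndependent ℝ ![a, b, c, d] := fun h => by
    have hcard := h.card_le_finrank_succ
    rw [Fintype.card_fin] at hcard
    have := (vectorSpan ℝ (range ![a, b, c, d])).finrank_le
    omega
  obtain ⟨I, x, hxI, hxI'⟩ := Convex.radon_partition hdep
  have himage (J : Set (Fin 4)) : ![a, b, c, d] '' J =
      {x | (0 ∈ J ∧ x = a) ∨ (1 ∈ J ∧ x = b) ∨ (2 ∈ J ∧ x = c) ∨ (3 ∈ J ∧ x = d)} := by
    ext x
    simp [Fin.exists_fin_succ, eq_comm]
  rw [himage] at hxI hxI'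
  simp only [← convexHull_pair, not_disjoint_iff, insert_def, mem_ofPred_eq, mem_singleton_iff]
  by_cases h0 : 0 ∈ I <;> by_cases h1 : 1 ∈ I <;> by_cases h2 : 2 ∈ I <;> by_cases h3 : 3 ∈ I <;>
    simp [h0, h1, h2, h3] at hxI hxI' <;> grind

theorem range_vec_three {α : Type*} (x y z : α) : range ![x, y, z] = {x, y, z} := by
  rw [Matrix.range_cons, Matrix.range_cons_cons_empty, singleton_union]

theorem exists_affineBasis_coe_eq [Fact (Module.finrank ℝ E = 2)]
    (h : AffineIndependent ℝ ![a, b, c]) : ∃ B : AffineBasis (Fin 3) ℝ E, ⇑B = ![a, b, c] := by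
  have : FiniteDimensional ℝ E := .of_fact_finrank_eq_two
  have hspan := h.affineSpan_eq_top_iff_card_eq_finrank_add_one.2
    (by rw [Fact.out (p := Module.finrank ℝ E = 2), Fintype.card_fin])
  exact ⟨⟨_, h, hspan⟩, rfl⟩

theorem coord_eq_zero_of_mem_segment {B : AffineBasis (Fin 3) ℝ E} (hB : ⇑B = ![a, b, c])
    (hp : p ∈ segment ℝ a b) : B.coord 2 p = 0 := by
  obtain ⟨rfl, rfl, rfl⟩ : a = B 0 ∧ b = B 1 ∧ c = B 2 := by simp [hB]
  have hzero : Convex ℝ (B.coord 2 ⁻¹' {0}) := (convex_singleton 0).affine_preimage _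
  exact hzero.segment_subset (by simp) (by simp) hp

theorem collinear_of_coord_eq_zero {B : AffineBasis (Fin 3) ℝ E} (hB : ⇑B = ![a, b, c])
    (hp : B.coord 2 p = 0) : Collinear ℝ {p, a, b} := by
  obtain ⟨rfl, rfl, rfl⟩ : a = B 0 ∧ b = B 1 ∧ c = B 2 := by simp [hB]
  apply collinear_insert_of_mem_affineSpan_pair
  have hsum := B.sum_coord_apply_eq_one p
  have hcomb := B.linear_combination_coord_eq_self p
  rw [Fin.sum_univ_three, hp, add_zero] at hsum
  rw [Fin.sum_univ_three, hp, zero_smul, add_zero] at hcomb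
  rw [← hcomb, eq_sub_of_add_eq hsum, ← AffineMap.lineMap_apply_module]
  exact AffineMap.lineMap_mem_affineSpan_pair _ _ _

theorem apply_neg_of_mem_openSegment (f : E →ᵃ[ℝ] ℝ) (hp : p ∈ openSegment ℝ c d)
    (hfp : f p = 0) (hc : 0 < f c) : f d < 0 := by
  obtain ⟨α, β, hα, hβ, hαβ, rfl⟩ := hp
  rw [Convex.combo_affine_apply hαβ, smul_eq_mul, smul_eq_mul] at hfp
  nlinarith [mul_pos hα hc]

theorem disjoint_segment_of_coord_pos {B : AffineBasis (Fin 3) ℝ E} (hB : ⇑B = ![a, b, c])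
    (hp : 0 < B.coord 2 p) (hq : 0 < B.coord 2 q) :
    Disjoint (segment ℝ p q) (segment ℝ a b) := by
  have hpos : segment ℝ p q ⊆ B.coord 2 ⁻¹' Ioi 0 :=
    ((convex_Ioi (0 : ℝ)).affine_preimage _).segment_subset hp hq
  exact Set.disjoint_left.2 fun x hx hx' =>
    (hpos hx).ne' (coord_eq_zero_of_mem_segment hB hx')

end Convex

section Triangle

variable {E : Type*} [NormedAddCommGroup E] [NormedSpace ℝ E] {a b c p q : E}

theorem affineIndependent_of_nonempty_interior_convexHull [Fact (Module.finrank ℝ E = 2)]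
    (h : (interior (convexHull ℝ {a, b, c})).Nonempty) : AffineIndependent ℝ ![a, b, c] := by
  have : FiniteDimensional ℝ E := .of_fact_finrank_eq_two
  rw [interior_convexHull_nonempty_iff_affineSpan_eq_top, ← range_vec_three] at h
  rw [affineIndependent_iff_finrank_vectorSpan_eq ℝ _ (Fintype.card_fin 3),
    ← direction_affineSpan, h, AffineSubspace.direction_top, finrank_top]
  exact Fact.out

/-- The union of the three sides of the triangle with vertices `a`, `b`, `c`. -/
def triangleSides (a b c : E) : Set E :=
  segment ℝ a b ∪ segment ℝ a c ∪ segment ℝ b c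

theorem frontier_convexHull_subset_triangleSides [Fact (Module.finrank ℝ E = 2)]
    (h : AffineIndependent ℝ ![a, b, c]) :
    frontier (convexHull ℝ {a, b, c}) ⊆ triangleSides a b c := by
  obtain ⟨B, hB⟩ := exists_affineBasis_coe_eq h
  have hclosed : IsClosed (convexHull ℝ {a, b, c}) :=
    (toFinite {a, b, c}).isClosed_convexHull ℝ
  intro x hx
  rw [hclosed.frontier_eq, ← range_vec_three, ← hB, B.interior_convexHull,
    B.convexHull_eq_nonneg_coord] at hx
  obtain ⟨hnonneg, hpos⟩ := hx
  have hsum := B.sum_coord_apply_eq_one x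
  have hcomb := B.linear_combination_coord_eq_self x
  simp only [mem_ofPred_eq, not_forall, not_lt] at hnonneg hpos
  obtain ⟨i, hi⟩ := hpos
  have hzero : B.coord i x = 0 := le_antisymm hi (hnonneg i)
  rw [Fin.sum_univ_three] at hsum hcomb
  simp only [hB] at hcomb
  match i, hzero with
  | 0, hzero =>
    rw [hzero, zero_add] at hsum
    rw [hzero, zero_smul, zero_add] at hcomb
    exact .inr ⟨_, _, hnonneg 1, hnonneg 2, hsum, hcomb⟩
  | 1, hzero =>
    rw [hzero, add_zero] at hsum
    rw [hzero, zero_smul, add_zero] at hcomb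
    exact .inl <| .inr ⟨_, _, hnonneg 0, hnonneg 2, hsum, hcomb⟩
  | 2, hzero =>
    rw [hzero, add_zero] at hsum
    rw [hzero, zero_smul, add_zero] at hcomb
    exact .inl <| .inl ⟨_, _, hnonneg 0, hnonneg 1, hsum, hcomb⟩

theorem corner_notMem_interior_convexHull [Fact (Module.finrank ℝ E = 2)]
    (hp : p ∈ ({a, b, c} : Set E)) : p ∉ interior (convexHull ℝ {a, b, c}) := by
  intro hint
  obtain ⟨B, hB⟩ := exists_affineBasis_coe_eq
    (affineIndependent_of_nonempty_interior_convexHull ⟨p, hint⟩)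
  rw [← range_vec_three, ← hB] at hp hint
  obtain ⟨i, rfl⟩ := hp
  rw [B.interior_convexHull] at hint
  exact (hint (i + 1)).ne' (B.coord_apply_ne (by simp))

theorem subset_interior_of_disjoint_triangleSides [Fact (Module.finrank ℝ E = 2)] {s : Set E}
    (hs : IsPreconnected s) (hsides : Disjoint s (triangleSides a b c))
    (hint : (s ∩ interior (convexHull ℝ {a, b, c})).Nonempty) :
    s ⊆ interior (convexHull ℝ {a, b, c}) := by
  have h := affineIndependent_of_nonempty_interior_convexHull
    (hint.mono inter_subset_right)
  refine subset_of_isPreconnected_of_disjoint_frontier hs isOpen_interior ?_ hint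
  exact (hsides.mono_right (frontier_interior_subset.trans
    (frontier_convexHull_subset_triangleSides h))).symm

theorem exists_mem_openSegment_forall_coord_pos [FiniteDimensional ℝ E]
    {B : AffineBasis (Fin 3) ℝ E} (hB : ⇑B = ![a, b, c]) (hp : p ∈ openSegment ℝ a b)
    (hq : 0 < B.coord 2 q) : ∃ y ∈ openSegment ℝ p q, ∀ i, 0 < B.coord i y := by
  obtain ⟨rfl, rfl, rfl⟩ : a = B 0 ∧ b = B 1 ∧ c = B 2 := by simp [hB]
  obtain ⟨α, β, hα, hβ, hαβ, hcomb⟩ := hp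
  have hcoord (i : Fin 3) : B.coord i p = α * B.coord i (B 0) + β * B.coord i (B 1) :=
    hcomb ▸ Convex.combo_affine_apply hαβ
  have hp₀ : 0 < B.coord 0 p := by simpa [hcoord] using hα
  have hp₁ : 0 < B.coord 1 p := by simpa [hcoord] using hβ
  have hp₂ : B.coord 2 p = 0 := by simp [hcoord]
  have hopen : ∀ i, 0 < B.coord i p → ∀ᶠ t in 𝓝[>] (0 : ℝ),
      0 < B.coord i (AffineMap.lineMap p q t) := fun i hi => by
    have hcont : Continuous fun t : ℝ => B.coord i (AffineMap.lineMap p q t) :=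
      (continuous_barycentric_coord B i).comp AffineMap.lineMap_continuous
    exact nhdsWithin_le_nhds <| hcont.continuousAt.eventually_const_lt (by simpa using hi)
  obtain ⟨t, ht₀, ht₁, ht⟩ :=
    ((hopen 0 hp₀).and ((hopen 1 hp₁).and (Ioo_mem_nhdsGT zero_lt_one))).exists
  refine ⟨_, lineMap_mem_openSegment ℝ p q ht, ?_⟩
  have ht₂ : 0 < B.coord 2 (AffineMap.lineMap p q t) := by
    rw [AffineMap.apply_lineMap, hp₂, AffineMap.lineMap_apply_ring]
    nlinarith [mul_pos ht.1 hq]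
  intro i
  match i with
  | 0 => exact ht₀
  | 1 => exact ht₁
  | 2 => exact ht₂

/-- Close to `p` the segment from `p` to `q` is inside the triangle, and it cannot leave through
any of the sides. -/
theorem mem_interior_of_mem_openSegment_side [Fact (Module.finrank ℝ E = 2)]
    {B : AffineBasis (Fin 3) ℝ E} (hB : ⇑B = ![a, b, c]) (hp : p ∈ openSegment ℝ a b)
    (hq : 0 < B.coord 2 q) (hac : Disjoint (segment ℝ p q) (segment ℝ a c))
    (hbc : Disjoint (segment ℝ p q) (segment ℝ b c)) :
    q ∈ interior (convexHull ℝ {a, b, c}) := by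
  have : FiniteDimensional ℝ E := .of_fact_finrank_eq_two
  obtain ⟨y, hy, hpos⟩ := exists_mem_openSegment_forall_coord_pos hB hp hq
  have hyq : segment ℝ y q ⊆ segment ℝ p q :=
    (convex_segment p q).segment_subset (openSegment_subset_segment _ _ _ hy)
      (right_mem_segment _ _ _)
  have hsides : Disjoint (segment ℝ y q) (triangleSides a b c) :=
    .union_right (.union_right (disjoint_segment_of_coord_pos hB (hpos 2) hq) (hac.mono_left hyq))
      (hbc.mono_left hyq)
  have hyint : y ∈ interior (convexHull ℝ {a, b, c}) := by
    rwa [← range_vec_three, ← hB, B.interior_convexHull]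
  exact subset_interior_of_disjoint_triangleSides (convex_segment y q).isPreconnected hsides
    ⟨y, left_mem_segment _ _ _, hyint⟩ (right_mem_segment _ _ _)

end Triangle

theorem apply_mem_Ioo_of_mem_interior_convexHull {E : Type*} [AddCommGroup E] [Module ℝ E]
    [TopologicalSpace E] {f : E →ₗ[ℝ] ℝ} (hf : IsOpenMap f) {s : Set E} {m M : ℝ}
    (hs : MapsTo f s (Icc m M)) {p : E} (hp : p ∈ interior (convexHull ℝ s)) :
    f p ∈ Ioo m M := by
  have hhull : MapsTo f (convexHull ℝ s) (Icc m M) :=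
    convexHull_min hs ((convex_Icc m M).linear_preimage f)
  simpa using hf.mapsTo_interior hhull hp

/-! ### Straight-line drawings -/

section Drawing

variable {V W : Type*} {G : SimpleGraph V} {ρ : V → ℝ × ℝ} {a b c d p q u v w x y z : V}

instance fact_finrank_real_prod : Fact (Module.finrank ℝ (ℝ × ℝ) = 2) :=
  ⟨by simp⟩

/-- The vertex `p` is drawn in the interior of the triangle formed by the images of `a`, `b`
and `c`. -/
def InTriangle (ρ : V → ℝ × ℝ) (a b c p : V) : Prop :=
  ρ p ∈ interior (convexHull ℝ {ρ a, ρ b, ρ c})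

theorem inTriangle_swap_left : InTriangle ρ a b c p ↔ InTriangle ρ b a c p := by
  rw [InTriangle, InTriangle, insert_comm]

theorem inTriangle_swap_right : InTriangle ρ a b c p ↔ InTriangle ρ a c b p := by
  rw [InTriangle, InTriangle, pair_comm]

theorem InTriangle.mem_convexHull (h : InTriangle ρ a b c p) :
    ρ p ∈ convexHull ℝ {ρ a, ρ b, ρ c} :=
  interior_subset h

theorem apply_mem_convexHull_of_mem (hp : p ∈ ({a, b, c} : Set V)) :
    ρ p ∈ convexHull ℝ {ρ a, ρ b, ρ c} := by
  have hmem := mem_image_of_mem ρ hp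
  rw [image_insert_eq, image_pair] at hmem
  exact subset_convexHull ℝ _ hmem

theorem InTriangle.notMem (h : InTriangle ρ a b c p) : p ∉ ({a, b, c} : Set V) := fun hp => by
  have hmem := mem_image_of_mem ρ hp
  rw [image_insert_eq, image_pair] at hmem
  exact corner_notMem_interior_convexHull hmem h

theorem InTriangle.trans {a' b' c' : V} (h : InTriangle ρ a b c p)
    (ha : ρ a ∈ convexHull ℝ {ρ a', ρ b', ρ c'}) (hb : ρ b ∈ convexHull ℝ {ρ a', ρ b', ρ c'})
    (hc : ρ c ∈ convexHull ℝ {ρ a', ρ b', ρ c'}) : InTriangle ρ a' b' c' p :=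
  interior_mono (convexHull_min (by simp [insert_subset_iff, ha, hb, hc]) (convex_convexHull ℝ _)) h

namespace IsStraightLineDrawing

theorem comp {H : SimpleGraph W} {ρ : W → ℝ × ℝ} (h : IsStraightLineDrawing H ρ) (f : G →g H)
    (hf : Function.Injective f) : IsStraightLineDrawing G (ρ ∘ f) := by
  have hseg (e : Sym2 V) : edgeSeg (ρ ∘ f) e = edgeSeg ρ (e.map f) := by
    induction e with | _ u v => rfl
  have hmem {e : Sym2 V} {v : V} : f v ∈ e.map f ↔ v ∈ e := by
    simp [Sym2.mem_map, hf.eq_iff]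
  refine ⟨h.inj.comp hf, fun e he v hv => ?_, fun e he e' he' hdisj => ?_⟩
  · rw [hseg]
    exact h.no_vertex_on_edge _ (f.map_mem_edgeSet he) _ (hmem.not.2 hv)
  · rw [hseg, hseg]
    refine h.meet_at_most_once _ (f.map_mem_edgeSet he) _ (f.map_mem_edgeSet he') ?_
    rintro _ hv
    obtain ⟨v, hve, rfl⟩ := Sym2.mem_map.1 hv
    exact hmem.not.2 (hdisj v hve)

theorem notMem_segment (h : IsStraightLineDrawing G ρ) (hab : G.Adj a b) (hpa : p ≠ a)
    (hpb : p ≠ b) : ρ p ∉ segment ℝ (ρ a) (ρ b) := fun hp =>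
  h.no_vertex_on_edge s(a, b) hab p (by simp [hpa, hpb])
    (mem_openSegment_of_ne_left_right (h.inj.ne hpa.symm) (h.inj.ne hpb.symm) hp)

theorem disjoint_segment (h : IsStraightLineDrawing G ρ) (hab : G.Adj a b) (hcd : G.Adj c d)
    (hdisj : ∀ v ∈ s(a, b), v ∉ s(c, d)) (hcross : ¬Crosses ρ s(a, b) s(c, d)) :
    Disjoint (segment ℝ (ρ a) (ρ b)) (segment ℝ (ρ c) (ρ d)) := by
  simp only [Sym2.mem_iff, forall_eq_or_imp, forall_eq, not_or] at hdisj
  obtain ⟨⟨hac, had⟩, hbc, hbd⟩ := hdisj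
  rw [Set.disjoint_left]
  intro x hab' hcd'
  refine hcross ⟨by simp [hac, had, hbc, hbd], x, ?_, ?_⟩
  · refine mem_openSegment_of_ne_left_right ?_ ?_ hab' <;> rintro rfl
    exacts [h.notMem_segment hcd hac had hcd', h.notMem_segment hcd hbc hbd hcd']
  · refine mem_openSegment_of_ne_left_right ?_ ?_ hcd' <;> rintro rfl
    exacts [h.notMem_segment hab (Ne.symm hac) (Ne.symm hbc) hab',
      h.notMem_segment hab (Ne.symm had) (Ne.symm hbd) hab']

theorem affineIndependent (h : IsStraightLineDrawing G ρ) (hab : G.Adj a b) (hac : G.Adj a c)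
    (hbc : G.Adj b c) : AffineIndependent ℝ ![ρ a, ρ b, ρ c] := by
  rw [affineIndependent_iff_not_collinear_set]
  intro hcol
  rcases hcol.wbtw_or_wbtw_or_wbtw with hw | hw | hw <;> rw [← mem_segment_iff_wbtw] at hw
  exacts [h.notMem_segment hac hab.ne' hbc.ne hw, h.notMem_segment hab.symm hbc.ne' hac.ne' hw,
    h.notMem_segment hbc.symm hac.ne hab.ne hw]

theorem inTriangle_of_mem_convexHull (h : IsStraightLineDrawing G ρ) (hab : G.Adj a b)
    (hac : G.Adj a c) (hbc : G.Adj b c) (hp : p ∉ ({a, b, c} : Set V))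
    (hmem : ρ p ∈ convexHull ℝ {ρ a, ρ b, ρ c}) : InTriangle ρ a b c p := by
  simp only [mem_insert_iff, mem_singleton_iff, not_or] at hp
  obtain ⟨hpa, hpb, hpc⟩ := hp
  by_contra hint
  rcases frontier_convexHull_subset_triangleSides (h.affineIndependent hab hac hbc)
    ⟨subset_closure hmem, hint⟩ with (hside | hside) | hside
  exacts [h.notMem_segment hab hpa hpb hside, h.notMem_segment hac hpa hpc hside,
    h.notMem_segment hbc hpb hpc hside]

theorem inTriangle_of_adj (h : IsStraightLineDrawing G ρ) (hab : G.Adj a b) (hac : G.Adj a c)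
    (hbc : G.Adj b c) (hp : InTriangle ρ a b c p) (hpq : G.Adj p q)
    (hq : q ∉ ({a, b, c} : Set V))
    (hcross : ∀ e ∈ ({s(a, b), s(a, c), s(b, c)} : Set (Sym2 V)), ¬Crosses ρ s(p, q) e) :
    InTriangle ρ a b c q := by
  have hp' := hp.notMem
  simp only [mem_insert_iff, mem_singleton_iff, not_or] at hp' hq
  have hsides : Disjoint (segment ℝ (ρ p) (ρ q)) (triangleSides (ρ a) (ρ b) (ρ c)) := by
    refine .union_right (.union_right ?_ ?_) ?_ <;>
      refine h.disjoint_segment hpq ‹_› (by simp [hp', hq]) (hcross _ (by simp))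
  exact subset_interior_of_disjoint_triangleSides (convex_segment _ _).isPreconnected hsides
    ⟨_, left_mem_segment _ _ _, hp⟩ (right_mem_segment _ _ _)

end IsStraightLineDrawing

/-- A straight-line drawing without crossings. -/
structure IsPlanarDrawing (G : SimpleGraph V) (ρ : V → ℝ × ℝ) : Prop
    extends IsStraightLineDrawing G ρ where
  not_crosses : ∀ e ∈ G.edgeSet, ∀ f ∈ G.edgeSet, ¬Crosses ρ e f

namespace IsPlanarDrawing

theorem isICPlanarDrawing (h : IsPlanarDrawing G ρ) : IsICPlanarDrawing G ρ :=
  ⟨h.toIsStraightLineDrawing, fun e he f hf _ _ hef => (h.not_crosses e he f hf hef).elim,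
    fun e he _ _ ⟨e', he', hee'⟩ => (h.not_crosses e he e' he' hee').elim⟩

theorem inTriangle_of_adj (h : IsPlanarDrawing G ρ) (hab : G.Adj a b) (hac : G.Adj a c)
    (hbc : G.Adj b c) (hp : InTriangle ρ a b c p) (hpq : G.Adj p q)
    (hq : q ∉ ({a, b, c} : Set V)) : InTriangle ρ a b c q := by
  refine h.toIsStraightLineDrawing.inTriangle_of_adj hab hac hbc hp hpq hq ?_
  rintro e (rfl | rfl | rfl) <;> exact h.not_crosses _ hpq _ ‹_›

theorem inTriangle_of_four_clique (h : IsPlanarDrawing G ρ) (hab : G.Adj a b) (hac : G.Adj a c)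
    (had : G.Adj a d) (hbc : G.Adj b c) (hbd : G.Adj b d) (hcd : G.Adj c d) :
    InTriangle ρ a b c d ∨ InTriangle ρ a b d c ∨ InTriangle ρ a c d b ∨ InTriangle ρ b c d a := by
  have hdisj {e f g i : V} (hef : G.Adj e f) (hgi : G.Adj g i)
      (hne : ∀ v ∈ s(e, f), v ∉ s(g, i)) :
      Disjoint (segment ℝ (ρ e) (ρ f)) (segment ℝ (ρ g) (ρ i)) :=
    h.disjoint_segment hef hgi hne (h.not_crosses _ hef _ hgi)
  have : a ≠ b ∧ a ≠ c ∧ a ≠ d ∧ b ≠ c ∧ b ≠ d ∧ c ≠ d :=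
    ⟨hab.ne, hac.ne, had.ne, hbc.ne, hbd.ne, hcd.ne⟩
  rcases radon_four_points (Fact.out (p := Module.finrank ℝ (ℝ × ℝ) = 2)).le (ρ a) (ρ b) (ρ c) (ρ d)
    with hd | hc | hb | ha | hx | hx | hx
  · exact .inl (h.inTriangle_of_mem_convexHull hab hac hbc (by grind) hd)
  · exact .inr <| .inl (h.inTriangle_of_mem_convexHull hab had hbd (by grind) hc)
  · exact .inr <| .inr <| .inl (h.inTriangle_of_mem_convexHull hac had hcd (by grind) hb)
  · exact .inr <| .inr <| .inr (h.inTriangle_of_mem_convexHull hbc hbd hcd (by grind) ha)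
  · exact (hx (hdisj hab hcd (by grind))).elim
  · exact (hx (hdisj hac hbd (by grind))).elim
  · exact (hx (hdisj had hbc (by grind))).elim

/-- The vertex `q` lies in one of the three triangles into which `p` splits the triangle of
`a`, `b` and `c`. If it is one of those with corner `p`, the edge from `q` to the third corner of
the big triangle would trap that corner in its own triangle. -/
theorem inTriangle_of_hub_inTriangle (h : IsPlanarDrawing G ρ)
    (hab : G.Adj a b) (hac : G.Adj a c) (hbc : G.Adj b c) (hap : G.Adj a p) (hbp : G.Adj b p)
    (hcp : G.Adj c p) (haq : G.Adj a q) (hbq : G.Adj b q) (hcq : G.Adj c q) (hpq : p ≠ q)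
    (hc : InTriangle ρ a b p c) : InTriangle ρ a b c q := by
  have : a ≠ q ∧ b ≠ q ∧ c ≠ q := ⟨haq.ne, hbq.ne, hcq.ne⟩
  have : a ≠ b ∧ a ≠ c ∧ b ≠ c ∧ a ≠ p ∧ b ≠ p := ⟨hab.ne, hac.ne, hbc.ne, hap.ne, hbp.ne⟩
  have hq : InTriangle ρ a b p q := h.inTriangle_of_adj hab hap hbp hc hcq (by grind)
  have hcorner {v : V} (hv : v ∈ ({a, b, p} : Set V)) : ρ v ∈ convexHull ℝ {ρ a, ρ b, ρ p} :=
    apply_mem_convexHull_of_mem hv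
  classical
  obtain ⟨z, hz, hqz⟩ := exists_mem_convexHull_insert_erase (s := {ρ a, ρ b, ρ p})
    (by simpa using hq.mem_convexHull) (by simpa using hc.mem_convexHull)
  simp only [Finset.mem_insert, Finset.mem_singleton] at hz
  rcases hz with rfl | rfl | rfl
  · have hq' : InTriangle ρ b c p q :=
      h.inTriangle_of_mem_convexHull hbc hbp hcp (by grind) (convexHull_mono (by grind) hqz)
    have ha := h.inTriangle_of_adj hbc hbp hcp hq' haq.symm (by grind)
    exact ((ha.trans (hcorner (by simp)) hc.mem_convexHull (hcorner (by simp))).notMem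
      (by simp)).elim
  · have hq' : InTriangle ρ a c p q :=
      h.inTriangle_of_mem_convexHull hac hap hcp (by grind) (convexHull_mono (by grind) hqz)
    have hb := h.inTriangle_of_adj hac hap hcp hq' hbq.symm (by grind)
    exact ((hb.trans (hcorner (by simp)) hc.mem_convexHull (hcorner (by simp))).notMem
      (by simp)).elim
  · exact h.inTriangle_of_mem_convexHull hab hac hbc (by grind) (convexHull_mono (by grind) hqz)

theorem inTriangle_or_inTriangle_of_hubs (h : IsPlanarDrawing G ρ)
    (hab : G.Adj a b) (hac : G.Adj a c) (hbc : G.Adj b c) (hap : G.Adj a p) (hbp : G.Adj b p)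
    (hcp : G.Adj c p) (haq : G.Adj a q) (hbq : G.Adj b q) (hcq : G.Adj c q) (hpq : p ≠ q) :
    InTriangle ρ a b c p ∨ InTriangle ρ a b c q := by
  rcases h.inTriangle_of_four_clique hab hac hap hbc hbp hcp with hp | hc | hb | ha
  · exact .inl hp
  · exact .inr <| h.inTriangle_of_hub_inTriangle hab hac hbc hap hbp hcp haq hbq hcq hpq hc
  · exact .inr <| inTriangle_swap_right.1 <|
      h.inTriangle_of_hub_inTriangle hac hab hbc.symm hap hcp hbp haq hcq hbq hpq hb
  · exact .inr <| inTriangle_swap_left.1 <| inTriangle_swap_right.1 <|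
      h.inTriangle_of_hub_inTriangle hbc hab.symm hac.symm hbp hcp hap hbq hcq haq hpq ha

end IsPlanarDrawing

theorem Crosses.symm {e f : Sym2 V} (h : Crosses ρ e f) : Crosses ρ f e :=
  ⟨fun v hvf hve => h.1 v hve hvf, by rw [inter_comm]; exact h.2⟩

theorem IsStraightLineDrawing.not_crosses_of_collinear (h : IsStraightLineDrawing G ρ)
    (huv : G.Adj u v) (hxy : G.Adj x y) (hcol : Collinear ℝ {ρ x, ρ u, ρ v}) :
    ¬Crosses ρ s(u, v) s(x, y) := by
  rintro ⟨hdisj, X, hXuv, hXxy⟩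
  simp only [Sym2.mem_iff, forall_eq_or_imp, forall_eq, not_or] at hdisj
  obtain ⟨⟨hux, huy⟩, hvx, hvy⟩ := hdisj
  have hXuv' : Wbtw ℝ (ρ u) X (ρ v) :=
    mem_segment_iff_wbtw.1 (openSegment_subset_segment _ _ _ hXuv)
  have hsub : segment ℝ X (ρ x) ⊆ segment ℝ (ρ x) (ρ y) :=
    (convex_segment _ _).segment_subset (openSegment_subset_segment _ _ _ hXxy)
      (left_mem_segment _ _ _)
  rcases hcol.wbtw_or_wbtw_or_wbtw with hw | hw | hw
  · exact h.notMem_segment hxy hux huy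
      (hsub (mem_segment_iff_wbtw.2 (hw.symm.trans_left_right hXuv'.symm)))
  · exact h.notMem_segment hxy hvx hvy
      (hsub (mem_segment_iff_wbtw.2 (hw.trans_left_right hXuv')))
  · exact h.notMem_segment huv.symm (Ne.symm hvx) (Ne.symm hux) (mem_segment_iff_wbtw.2 hw)

namespace IsICPlanarDrawing

theorem not_crosses_of_mem_of_crosses (h : IsICPlanarDrawing G ρ) {e e' f f' : Sym2 V}
    (he : e ∈ G.edgeSet) (he' : e' ∈ G.edgeSet) (hcross : Crosses ρ e e') (hf : f ∈ G.edgeSet)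
    (hf' : f' ∈ G.edgeSet) (hne : f ≠ e) (hve : v ∈ e) (hvf : v ∈ f) : ¬Crosses ρ f f' :=
  fun hff' => h.2.2 f hf e he ⟨f', hf', hff'⟩ ⟨e', he', hcross⟩ hne v hvf hve

theorem inTriangle_of_crosses (h : IsICPlanarDrawing G ρ) (huv : G.Adj u v) (huz : G.Adj u z)
    (hvz : G.Adj v z) (hxy : G.Adj x y) (hzx : z ≠ x) (hzy : z ≠ y)
    (hcross : Crosses ρ s(u, v) s(x, y)) {B : AffineBasis (Fin 3) ℝ (ℝ × ℝ)}
    (hB : ⇑B = ![ρ u, ρ v, ρ z]) (hx : 0 < B.coord 2 (ρ x)) : InTriangle ρ u v z x := by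
  obtain ⟨hdisj, X, hXuv, hXxy⟩ := id hcross
  simp only [Sym2.mem_iff, forall_eq_or_imp, forall_eq, not_or] at hdisj
  have hsub : segment ℝ X (ρ x) ⊆ segment ℝ (ρ x) (ρ y) :=
    (convex_segment _ _).segment_subset (openSegment_subset_segment _ _ _ hXxy)
      (left_mem_segment _ _ _)
  have : u ≠ v ∧ u ≠ z ∧ v ≠ z := ⟨huv.ne, huz.ne, hvz.ne⟩
  have hdisj_uz : Disjoint (segment ℝ (ρ x) (ρ y)) (segment ℝ (ρ u) (ρ z)) :=
    h.1.disjoint_segment hxy huz (by grind) fun hc =>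
      h.not_crosses_of_mem_of_crosses (v := u) huv hxy hcross huz hxy (by grind) (by simp)
        (by simp) hc.symm
  have hdisj_vz : Disjoint (segment ℝ (ρ x) (ρ y)) (segment ℝ (ρ v) (ρ z)) :=
    h.1.disjoint_segment hxy hvz (by grind) fun hc =>
      h.not_crosses_of_mem_of_crosses (v := v) huv hxy hcross hvz hxy (by grind) (by simp)
        (by simp) hc.symm
  exact mem_interior_of_mem_openSegment_side hB hXuv hx (hdisj_uz.mono_left hsub)
    (hdisj_vz.mono_left hsub)

/-- Otherwise `x` is inside the triangle of `u`, `v` and `z`; the uncrossed path from `x` to `y`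
through `w` stays inside, while `y` lies beyond the line through `u` and `v`. -/
theorem coord_nonpos_of_crosses (h : IsICPlanarDrawing G ρ) (huv : G.Adj u v) (huz : G.Adj u z)
    (hvz : G.Adj v z) (hxy : G.Adj x y) (hxw : G.Adj x w) (hyw : G.Adj y w)
    (hdisj : Disjoint ({u, v, z} : Set V) {x, y, w})
    (hcross : Crosses ρ s(u, v) s(x, y)) {B : AffineBasis (Fin 3) ℝ (ℝ × ℝ)}
    (hB : ⇑B = ![ρ u, ρ v, ρ z]) : B.coord 2 (ρ x) ≤ 0 := by
  by_contra! hx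
  rw [Set.disjoint_left] at hdisj
  have : x ≠ y ∧ x ≠ w ∧ y ≠ w := ⟨hxy.ne, hxw.ne, hyw.ne⟩
  have hx_in := h.inTriangle_of_crosses huv huz hvz hxy (by grind) (by grind) hcross hB hx
  have huncrossed {p : V} (hp : p ∈ s(x, y)) (hpw : G.Adj p w) :
      ∀ e ∈ ({s(u, v), s(u, z), s(v, z)} : Set (Sym2 V)), ¬Crosses ρ s(p, w) e := by
    rintro e (rfl | rfl | rfl) <;>
      exact h.not_crosses_of_mem_of_crosses hxy huv hcross.symm hpw ‹_› (by grind) hp (by simp)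
  have hw_in := h.1.inTriangle_of_adj huv huz hvz hx_in hxw (by grind)
    (huncrossed (by simp) hxw)
  have hy_in := h.1.inTriangle_of_adj huv huz hvz hw_in hyw.symm (by grind)
    (by rw [Sym2.eq_swap (a := w)]; exact huncrossed (by simp) hyw)
  obtain ⟨X, hXuv, hXxy⟩ := hcross.2
  have hy : B.coord 2 (ρ y) < 0 :=
    apply_neg_of_mem_openSegment (B.coord 2) hXxy
      (coord_eq_zero_of_mem_segment hB (openSegment_subset_segment _ _ _ hXuv)) hx
  rw [InTriangle, ← range_vec_three, ← hB, B.interior_convexHull] at hy_in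
  exact (hy_in 2).not_gt hy

theorem not_crosses_of_disjoint_triangles (h : IsICPlanarDrawing G ρ) (huv : G.Adj u v)
    (huz : G.Adj u z) (hvz : G.Adj v z) (hxy : G.Adj x y) (hxw : G.Adj x w) (hyw : G.Adj y w)
    (hdisj : Disjoint ({u, v, z} : Set V) {x, y, w}) : ¬Crosses ρ s(u, v) s(x, y) := by
  intro hcross
  obtain ⟨B, hB⟩ := exists_affineBasis_coe_eq (h.1.affineIndependent huv huz hvz)
  have hx := h.coord_nonpos_of_crosses huv huz hvz hxy hxw hyw hdisj hcross hB
  have hy := h.coord_nonpos_of_crosses huv huz hvz hxy.symm hyw hxw (by rwa [insert_comm y])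
    (by rwa [Sym2.eq_swap (a := y)]) hB
  obtain ⟨X, hXuv, hXxy⟩ := hcross.2
  rcases hx.eq_or_lt with hx | hx
  · exact h.1.not_crosses_of_collinear huv hxy (collinear_of_coord_eq_zero hB hx) hcross
  · have := apply_neg_of_mem_openSegment (-B.coord 2) hXxy
      (by simp [coord_eq_zero_of_mem_segment hB (openSegment_subset_segment _ _ _ hXuv)])
      (by simpa using hx)
    exact hy.not_gt (by simpa using this)

end IsICPlanarDrawing

end Drawing

/-! ### Edge apexes -/

section EdgeApexes

variable {V : Type*} {G : SimpleGraph V}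

/-- The graph obtained from `G` by adding, for every edge `e`, a new vertex adjacent to the two
endpoints of `e`. The old vertices are `Sum.inl v`, the apex of `e` is `Sum.inr e`. -/
def withEdgeApexes (G : SimpleGraph V) : SimpleGraph (V ⊕ G.edgeSet) where
  Adj
    | .inl u, .inl v => G.Adj u v
    | .inl u, .inr e => u ∈ e.1
    | .inr e, .inl u => u ∈ e.1
    | .inr _, .inr _ => False
  symm.symm := by
    rintro (u | e) (v | f) h
    exacts [G.adj_symm h, h, h, h]
  loopless.irrefl := by
    rintro (u | e) h
    exacts [G.loopless.irrefl u h, h]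

/-- `G` as a subgraph of `withEdgeApexes G`. -/
def inlHom (G : SimpleGraph V) : G →g withEdgeApexes G where
  toFun := Sum.inl
  map_rel' h := h

theorem exists_eq_of_mem_edgeSet_withEdgeApexes {e : Sym2 (V ⊕ G.edgeSet)}
    (he : e ∈ (withEdgeApexes G).edgeSet) :
    (∃ f : G.edgeSet, e = f.1.map .inl) ∨ ∃ f : G.edgeSet, ∃ v ∈ f.1, e = s(.inl v, .inr f) := by
  induction e with | _ x y
  rcases x with u | e <;> rcases y with v | f
  · exact .inl ⟨⟨s(u, v), he⟩, rfl⟩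
  · exact .inr ⟨f, u, he, rfl⟩
  · exact .inr ⟨e, v, he, Sym2.eq_swap⟩
  · exact he.elim

theorem IsICPlanarDrawing.isPlanarDrawing_comp_inl {ρ : V ⊕ G.edgeSet → ℝ × ℝ}
    (h : IsICPlanarDrawing (withEdgeApexes G) ρ) : IsPlanarDrawing G (ρ ∘ Sum.inl) where
  toIsStraightLineDrawing := h.1.comp (inlHom G) Sum.inl_injective
  not_crosses e he f hf hcross := by
    induction e with | _ u v
    induction f with | _ x y
    have hdisj := hcross.1
    simp only [Sym2.mem_iff, forall_eq_or_imp, forall_eq, not_or] at hdisj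
    have hadj {a b : V} (hab : s(a, b) ∈ G.edgeSet) :
        (withEdgeApexes G).Adj (.inl a) (.inl b) ∧
          (withEdgeApexes G).Adj (.inl a) (.inr ⟨s(a, b), hab⟩) ∧
            (withEdgeApexes G).Adj (.inl b) (.inr ⟨s(a, b), hab⟩) :=
      ⟨hab, Sym2.mem_mk_left a b, Sym2.mem_mk_right a b⟩
    obtain ⟨huv, huz, hvz⟩ := hadj he
    obtain ⟨hxy, hxw, hyw⟩ := hadj hf
    refine h.not_crosses_of_disjoint_triangles huv huz hvz hxy hxw hyw ?_ ⟨?_, hcross.2⟩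
    · have hne : s(x, y) ≠ s(u, v) := by grind
      rw [Set.disjoint_left]
      grind
    · simpa using hdisj

end EdgeApexes

/-! ### Cubed paths -/

section CubedPath

variable {V : Type*} {G : SimpleGraph V} {ρ : V → ℝ × ℝ} {q : ℕ → V} {n : ℕ}

/-- The vertices `q 0, …, q (n - 1)` of `G` are distinct and any two of them at distance at most
`3` in this list are adjacent, so that they span a supergraph of the cube of a path. -/
structure IsCubedPath (G : SimpleGraph V) (q : ℕ → V) (n : ℕ) : Prop where
  injOn : InjOn q (Iio n)
  adj : ∀ ⦃i j⦄, i < j → j ≤ i + 3 → j < n → G.Adj (q i) (q j)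

namespace IsPlanarDrawing

theorem inTriangle_first_or_last (h : IsPlanarDrawing G ρ) (hq : IsCubedPath G q n) {i : ℕ}
    (hi : i + 4 < n) : InTriangle ρ (q (i + 1)) (q (i + 2)) (q (i + 3)) (q i) ∨
      InTriangle ρ (q (i + 1)) (q (i + 2)) (q (i + 3)) (q (i + 4)) := by
  have hne : q i ≠ q (i + 4) := fun heq => by
    have := hq.injOn (mem_Iio.2 (by omega)) (mem_Iio.2 hi) heq
    omega
  have hadj {j k : ℕ} (hjk : j < k) (hk : k ≤ j + 3) (hkn : k ≤ i + 4) : G.Adj (q j) (q k) :=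
    hq.adj hjk hk (by omega)
  apply h.inTriangle_or_inTriangle_of_hubs <;> first
    | exact hne
    | exact hadj (by omega) (by omega) (by omega)
    | exact (hadj (by omega) (by omega) (by omega)).symm

end IsPlanarDrawing

theorem InTriangle.not_inTriangle {a b c d : V} (h : InTriangle ρ a b c d) :
    ¬InTriangle ρ b c d a := fun h' => by
  exact (h'.trans (apply_mem_convexHull_of_mem (by simp)) (apply_mem_convexHull_of_mem (by simp))
    h.mem_convexHull).notMem (by simp)

theorem IsPlanarDrawing.exists_nested_triangles (h : IsPlanarDrawing G ρ)
    (hq : IsCubedPath G q n) (hn : 5 ≤ n) :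
    ∃ (w : ℕ → V) (K : ℕ), n ≤ 2 * K + 4 ∧
      ∀ j < K, InTriangle ρ (w j) (w (j + 1)) (w (j + 2)) (w (j + 3)) := by
  let Outward (i : ℕ) := InTriangle ρ (q (i + 1)) (q (i + 2)) (q (i + 3)) (q i)
  let Inward (i : ℕ) := InTriangle ρ (q i) (q (i + 1)) (q (i + 2)) (q (i + 3))
  have hub {i : ℕ} (hi : i + 4 < n) : Outward i ∨ Inward (i + 1) := h.inTriangle_first_or_last hq hi
  have hexcl {i : ℕ} (hin : Inward i) : ¬Outward i := hin.not_inTriangle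
  set m := (n - 5) / 2
  rcases hub (i := m) (by omega) with hm | hm
  · have hout : ∀ i ≤ m, Outward i := fun i hi => by
      induction hi using Nat.decreasingInduction with
      | self => exact hm
      | of_succ i hi ih => exact (hub (by omega)).resolve_right fun hin => hexcl hin ih
    refine ⟨fun j => q (m + 3 - j), m + 1, by omega, fun j hj => ?_⟩
    have hrev := inTriangle_swap_left.1 <| inTriangle_swap_right.1 <| inTriangle_swap_left.1 <|
      hout (m - j) (by omega)
    convert hrev using 2 <;> omega
  · have hin : ∀ i, m + 1 + i + 3 < n → Inward (m + 1 + i) := fun i => by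
      induction i with
      | zero => exact fun _ => hm
      | succ i ih => exact fun hi => (hub (by omega)).resolve_left (hexcl (ih (by omega)))
    exact ⟨fun j => q (m + 1 + j), n - 4 - m, by omega, fun j hj => hin j (by omega)⟩

theorem two_mul_le_three_mul_of_forall_mem_Ioo {K : ℕ} {x : ℕ → ℤ} {lo hi : ℤ}
    (hstep : ∀ j < K, ∀ a b, x j ∈ Icc a b → x (j + 1) ∈ Icc a b → x (j + 2) ∈ Icc a b →
      x (j + 3) ∈ Ioo a b)
    (h₀ : x 0 ∈ Icc lo hi) (h₁ : x 1 ∈ Icc lo hi) (h₂ : x 2 ∈ Icc lo hi) :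
    2 * K ≤ 3 * (hi - lo) := by
  induction K using Nat.strong_induction_on generalizing x lo hi with | _ K ih
  rcases Nat.eq_zero_or_pos K with rfl | hK
  · simp only [mem_Icc] at h₀
    omega
  have h₃ : x 3 ∈ Ioo lo hi := hstep 0 hK lo hi h₀ h₁ h₂
  rcases lt_or_ge K 3 with hK3 | hK3
  · simp only [mem_Ioo] at h₃
    omega
  have h₄ : x 4 ∈ Ioo lo hi := hstep 1 (by omega) lo hi h₁ h₂ (Ioo_subset_Icc_self h₃)
  have h₅ : x 5 ∈ Ioo lo hi :=
    hstep 2 (by omega) lo hi h₂ (Ioo_subset_Icc_self h₃) (Ioo_subset_Icc_self h₄)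
  have hshrink {k : ℤ} (hk : k ∈ Ioo lo hi) : k ∈ Icc (lo + 1) (hi - 1) := by
    simp only [mem_Ioo, mem_Icc] at hk ⊢
    omega
  have := ih (K - 3) (by omega) (x := fun j => x (j + 3))
    (fun j hj => hstep (j + 3) (by omega)) (hshrink h₃) (hshrink h₄) (hshrink h₅)
  omega

theorem two_mul_le_of_nested_triangles {K : ℕ} {w : ℕ → V}
    (hnest : ∀ j < K, InTriangle ρ (w j) (w (j + 1)) (w (j + 2)) (w (j + 3)))
    {f : ℝ × ℝ →ₗ[ℝ] ℝ} (hf : IsOpenMap f) (hint : ∀ v, ∃ k : ℤ, f (ρ v) = k) {A B : ℝ}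
    (hAB : ∀ v, f (ρ v) ∈ Icc A B) : 2 * K ≤ 3 * (B - A) := by
  choose x hx using hint
  have hmem (j : ℕ) : x (w j) ∈ Icc ⌈A⌉ ⌊B⌋ := by
    have := hAB (w j)
    rw [hx] at this
    exact ⟨Int.ceil_le.2 this.1, Int.le_floor.2 this.2⟩
  have hchain : 2 * (K : ℤ) ≤ 3 * (⌊B⌋ - ⌈A⌉) := by
    refine two_mul_le_three_mul_of_forall_mem_Ioo (x := fun j => x (w j))
      (fun j hj a b h₀ h₁ h₂ => ?_) (hmem 0) (hmem 1) (hmem 2)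
    have hmaps : MapsTo f {ρ (w j), ρ (w (j + 1)), ρ (w (j + 2))} (Icc (a : ℝ) b) := by
      have hcast {k : ℤ} (hk : k ∈ Icc a b) : (k : ℝ) ∈ Icc (a : ℝ) b := by simpa using hk
      rintro _ (rfl | rfl | rfl) <;> rw [hx]
      exacts [hcast h₀, hcast h₁, hcast h₂]
    have := apply_mem_Ioo_of_mem_interior_convexHull hf hmaps (hnest j hj)
    simpa only [hx, mem_Ioo, Int.cast_lt] using this
  have hcast : 2 * (K : ℝ) ≤ 3 * (⌊B⌋ - ⌈A⌉) := by exact_mod_cast hchain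
  linarith [Int.floor_le B, Int.le_ceil A]

theorem IsPlanarDrawing.le_nine_mul_of_isCubedPath (h : IsPlanarDrawing G ρ)
    (hq : IsCubedPath G q n) (hn : 6 ≤ n) {f : ℝ × ℝ →ₗ[ℝ] ℝ} (hf : IsOpenMap f)
    (hint : ∀ v, ∃ k : ℤ, f (ρ v) = k) {A B : ℝ} (hAB : ∀ v, f (ρ v) ∈ Icc A B) :
    n ≤ 9 * (B - A) := by
  obtain ⟨w, K, hK, hnest⟩ := h.exists_nested_triangles hq (by omega)
  have hwidth := two_mul_le_of_nested_triangles hnest hf hint hAB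
  have hcount : (n : ℝ) ≤ 3 * (2 * K) := by
    norm_cast
    omega
  linarith

theorem IsICPlanarDrawing.le_nine_mul_sSup_sub_sInf {ρ : V ⊕ G.edgeSet → ℝ × ℝ}
    [Finite (V ⊕ G.edgeSet)] (h : IsICPlanarDrawing (withEdgeApexes G) ρ)
    (hq : IsCubedPath G q n) (hn : 6 ≤ n) {f : ℝ × ℝ →ₗ[ℝ] ℝ} (hf : IsOpenMap f)
    (hint : ∀ v, ∃ k : ℤ, f (ρ v) = k) :
    n ≤ 9 * (sSup (range fun v => f (ρ v)) - sInf (range fun v => f (ρ v))) := by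
  have hfinite := finite_range fun v => f (ρ v)
  exact h.isPlanarDrawing_comp_inl.le_nine_mul_of_isCubedPath hq hn hf (fun v => hint _) fun v =>
    ⟨csInf_le hfinite.bddBelow (mem_range_self _), le_csSup hfinite.bddAbove (mem_range_self _)⟩

end CubedPath

/-! ### A planar drawing -/

theorem isPlanarDrawing_of_cells {V : Type*} {G : SimpleGraph V} {ρ : V → ℝ × ℝ}
    {cell : V → Set (ℝ × ℝ)} (hdisj : Pairwise (Disjoint on cell)) (hρ : ∀ v, ρ v ∈ cell v)
    (hedge : ∀ e ∈ G.edgeSet, ∃ v ∈ e, edgeSeg ρ e ⊆ cell v) : IsPlanarDrawing G ρ := by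
  have hunique {u v : V} {p : ℝ × ℝ} (hu : p ∈ cell u) (hv : p ∈ cell v) : u = v :=
    hdisj.eq (not_disjoint_iff.2 ⟨p, hu, hv⟩)
  have hcross : ∀ e ∈ G.edgeSet, ∀ f ∈ G.edgeSet, ¬Crosses ρ e f := by
    rintro e he f hf ⟨hef, p, hpe, hpf⟩
    obtain ⟨u, hue, hu⟩ := hedge e he
    obtain ⟨v, hvf, hv⟩ := hedge f hf
    obtain rfl := hunique (hu hpe) (hv hpf)
    exact hef u hue hvf
  refine ⟨⟨fun u v huv => hunique (hρ u) (huv ▸ hρ v), fun e he v hve hv => ?_,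
    fun e he f hf hef p hp => (hcross e he f hf ⟨hef, p, hp⟩).elim⟩, hcross⟩
  obtain ⟨w, hwe, hw⟩ := hedge e he
  exact hve (hunique (hρ v) (hw hv) ▸ hwe)

/-- The cube of the path on `n` vertices: the graph on `Fin n` in which two vertices are adjacent
if they differ by at most `3`. -/
def pathCube (n : ℕ) : SimpleGraph (Fin n) where
  Adj i j := i ≠ j ∧ (i : ℕ) ≤ j + 3 ∧ (j : ℕ) ≤ i + 3
  symm.symm := fun _ _ ⟨hne, hij, hji⟩ => ⟨hne.symm, hji, hij⟩
  loopless.irrefl := fun _ h => h.1 rfl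

theorem isCubedPath_pathCube (n : ℕ) [NeZero n] : IsCubedPath (pathCube n) (Fin.ofNat n) n where
  injOn i hi j hj hij := by
    simpa [Nat.mod_eq_of_lt (mem_Iio.1 hi), Nat.mod_eq_of_lt (mem_Iio.1 hj)] using
      congrArg Fin.val hij
  adj i j hij hji hj := by
    have hi := hij.trans hj
    simp only [pathCube, ne_eq, Fin.ext_iff, Fin.ofNat_eq_cast, Fin.val_natCast,
      Nat.mod_eq_of_lt hi, Nat.mod_eq_of_lt hj]
    omega

theorem exists_lt_of_mem_edgeSet_pathCube {n : ℕ} {e : Sym2 (Fin n)}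
    (he : e ∈ (pathCube n).edgeSet) : ∃ i j : Fin n, i < j ∧ (j : ℕ) ≤ i + 3 ∧ e = s(i, j) := by
  induction e with | _ i j
  obtain ⟨hne, hij, hji⟩ := he
  rcases hne.lt_or_gt with h | h
  exacts [⟨i, j, h, hji, rfl⟩, ⟨j, i, h, hij, Sym2.eq_swap⟩]

/-- Numbers the vertices of `withEdgeApexes (pathCube n)`: the vertex `i` of the path gets `(i, 0)`
and the apex of the edge from `i` to `i + j` gets `(i + j, j)`. -/
def apexIndex {n : ℕ} : Fin n ⊕ (pathCube n).edgeSet → Fin n × Fin 4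
  | .inl i => (i, 0)
  | .inr e => (e.1.sup, ⟨e.1.sup - e.1.inf, by
      obtain ⟨i, j, hij, hji, he⟩ := exists_lt_of_mem_edgeSet_pathCube e.2
      simp only [he, Sym2.sup_mk, Sym2.inf_mk, sup_eq_right.2 hij.le, inf_eq_left.2 hij.le]
      omega⟩)

theorem exists_apexIndex_inr_eq {n : ℕ} (e : (pathCube n).edgeSet) :
    ∃ (i j : Fin n) (d : Fin 4),
      d ≠ 0 ∧ (j : ℕ) = i + d ∧ e = s(i, j) ∧ apexIndex (.inr e) = (j, d) := by
  obtain ⟨i, j, hij, hji, he⟩ := exists_lt_of_mem_edgeSet_pathCube e.2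
  refine ⟨i, j, ⟨j - i, by omega⟩, ?_, ?_, he, ?_⟩
  · simp only [ne_eq, Fin.ext_iff, Fin.val_zero]
    omega
  · simp only
    omega
  · simp [apexIndex, he, sup_eq_right.2 hij.le, inf_eq_left.2 hij.le]

theorem apexIndex_injective {n : ℕ} : Function.Injective (apexIndex (n := n)) := by
  rintro (i | e) (k | f) h
  · exact congrArg Sum.inl (congrArg Prod.fst h)
  · obtain ⟨_, _, d, hd, -, -, hf⟩ := exists_apexIndex_inr_eq f
    exact (hd (congrArg Prod.snd (h.trans hf)).symm).elim
  · obtain ⟨_, _, d, hd, -, -, he⟩ := exists_apexIndex_inr_eq e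
    exact (hd (congrArg Prod.snd (he.symm.trans h))).elim
  · obtain ⟨i, j, d, -, hij, he, he'⟩ := exists_apexIndex_inr_eq e
    obtain ⟨k, l, d', -, hkl, hf, hf'⟩ := exists_apexIndex_inr_eq f
    obtain ⟨rfl, rfl⟩ := Prod.mk.inj (he'.symm.trans (h.trans hf'))
    obtain rfl : i = k := by omega
    exact congrArg Sum.inr (Subtype.ext (he.trans hf.symm))

theorem card_withEdgeApexes_pathCube_le {n : ℕ} [Fintype (Fin n ⊕ (pathCube n).edgeSet)] :
    Fintype.card (Fin n ⊕ (pathCube n).edgeSet) ≤ 4 * n := by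
  simpa [mul_comm] using Fintype.card_le_of_injective apexIndex apexIndex_injective

/-- Let `a, b, c` be the corners `(0, 6), (6, 0), (0, 0)` of a triangle and `p = (2, 2)` its
barycentre. This is the affine map sending `a, b, c` to `p, a, b`, so that the `i`-th power of it
maps `p, a, b, c` to the positions of the path vertices `i, i - 1, i - 2, i - 3`. -/
noncomputable def shrink : ℝ × ℝ →ᵃ[ℝ] ℝ × ℝ :=
  ((-LinearMap.fst ℝ ℝ ℝ - (2 / 3 : ℝ) • LinearMap.snd ℝ ℝ ℝ).prod
    (LinearMap.fst ℝ ℝ ℝ + (1 / 3 : ℝ) • LinearMap.snd ℝ ℝ ℝ)).toAffineMap +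
      AffineMap.const ℝ (ℝ × ℝ) (6, 0)

/-- The inverse of `shrink`. -/
noncomputable def grow : ℝ × ℝ →ᵃ[ℝ] ℝ × ℝ :=
  ((LinearMap.fst ℝ ℝ ℝ + (2 : ℝ) • LinearMap.snd ℝ ℝ ℝ).prod
    (-(3 : ℝ) • LinearMap.fst ℝ ℝ ℝ - (3 : ℝ) • LinearMap.snd ℝ ℝ ℝ)).toAffineMap +
      AffineMap.const ℝ (ℝ × ℝ) (-6, 18)

theorem grow_apply (x y : ℝ) : grow (x, y) = (x + 2 * y - 6, 18 - 3 * x - 3 * y) := by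
  ext <;> simp [grow] <;> ring

theorem shrink_apply (x y : ℝ) : shrink (x, y) = (6 - x - 2 / 3 * y, x + y / 3) := by
  ext <;> simp [shrink] <;> ring

theorem grow_mul_shrink : grow * shrink = 1 := by
  ext ⟨x, y⟩ <;> simp [grow_apply, shrink_apply] <;> ring

/-- The open triangle with corners `(0, 6)`, `(6, 0)` and `(0, 0)`. -/
def openTriangle : Set (ℝ × ℝ) := {p | 0 < p.1 ∧ 0 < p.2 ∧ p.1 + p.2 < 6}

/-- Disjoint pieces of `openTriangle \ grow ⁻¹' openTriangle`: the three segments joining the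
barycentre to the corners, and one region for each gadget point, cut out by the order of the
barycentric coordinates. -/
def sector : Fin 4 → Set (ℝ × ℝ)
  | 0 => {p | p ∈ openTriangle ∧ (p.2 = p.1 ∧ p.1 ≤ 6 - p.1 - p.2 ∨
      6 - p.1 - p.2 = p.2 ∧ p.2 ≤ p.1 ∨ 6 - p.1 - p.2 = p.1 ∧ p.1 ≤ p.2)}
  | 1 => {p | p ∈ openTriangle ∧ p.1 < 6 - p.1 - p.2 ∧ 6 - p.1 - p.2 < p.2}
  | 2 => {p | p ∈ openTriangle ∧ p.2 < 6 - p.1 - p.2 ∧ 6 - p.1 - p.2 < p.1}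
  | 3 => {p | p ∈ openTriangle ∧ p.2 < p.1 ∧ p.1 < 6 - p.1 - p.2}

/-- The position of the vertex with index `(0, j)`: the barycentre for `j = 0`. -/
def gadget : Fin 4 → ℝ × ℝ
  | 0 => (2, 2)
  | 1 => (1, 3)
  | 2 => (3, 1)
  | 3 => (2, 1)

theorem pairwise_disjoint_sector : Pairwise (Disjoint on sector) := by
  intro i j hij
  simp only [Function.onFun, Set.disjoint_left]
  fin_cases i <;> fin_cases j <;> simp [sector] at hij ⊢ <;> grind

theorem preimage_grow_openTriangle_subset : grow ⁻¹' openTriangle ⊆ openTriangle := by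
  rintro ⟨x, y⟩
  simp only [openTriangle, mem_preimage, grow_apply, mem_ofPred_eq]
  grind

theorem sector_subset_sdiff (j : Fin 4) : sector j ⊆ openTriangle \ grow ⁻¹' openTriangle := by
  rintro ⟨x, y⟩
  simp only [openTriangle, mem_sdiff, mem_preimage, grow_apply, mem_ofPred_eq]
  fin_cases j <;> simp [sector, openTriangle] <;> grind

theorem gadget_mem_sector (j : Fin 4) : gadget j ∈ sector j := by
  fin_cases j <;> norm_num [gadget, sector, openTriangle]

theorem openSegment_gadget_subset (j : Fin 4) (hj : j ≠ 0) :
    openSegment ℝ (gadget 0) ((grow ^ (j : ℕ)) (gadget 0)) ⊆ sector 0 ∧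
      openSegment ℝ (gadget j) (gadget 0) ⊆ sector j ∧
        openSegment ℝ (gadget j) ((grow ^ (j : ℕ)) (gadget 0)) ⊆ sector j := by
  refine ⟨?_, ?_, ?_⟩ <;> rintro _ ⟨s, t, hs, ht, hst, rfl⟩ <;> fin_cases j <;>
    simp [gadget, sector, openTriangle, grow_apply, pow_succ] at hj ⊢ <;> grind

theorem pairwise_disjoint_sdiff_succ {α : Type*} {S : ℕ → Set α} (hS : Antitone S) :
    Pairwise (Disjoint on fun i => S i \ S (i + 1)) :=
  (pairwise_disjoint_on _).2 fun _ _ hij =>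
    Set.disjoint_left.2 fun _ hi hj => hi.2 (hS hij hj.1)

/-- The position of the vertex with index `(i, j)`. -/
noncomputable def spiralPoint (k : ℕ × Fin 4) : ℝ × ℝ := (shrink ^ k.1) (gadget k.2)

/-- A region containing the vertex with index `(i, j)` and the open edges for which that vertex is
the later one in lexicographic order. -/
def spiralCell (k : ℕ × Fin 4) : Set (ℝ × ℝ) := (grow ^ k.1) ⁻¹' sector k.2

theorem grow_pow_add_shrink_pow (i d : ℕ) (p : ℝ × ℝ) :
    (grow ^ (i + d)) ((shrink ^ i) p) = (grow ^ d) p := by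
  have : grow ^ (i + d) * shrink ^ i = grow ^ d := by
    rw [add_comm, pow_add, mul_assoc, pow_mul_pow_eq_one i grow_mul_shrink, mul_one]
  exact congrArg (fun f : ℝ × ℝ →ᵃ[ℝ] ℝ × ℝ => f p) this

theorem spiralPoint_mem_spiralCell (k : ℕ × Fin 4) : spiralPoint k ∈ spiralCell k := by
  have : (grow ^ k.1) (spiralPoint k) = gadget k.2 := grow_pow_add_shrink_pow k.1 0 _
  rw [spiralCell, mem_preimage, this]
  exact gadget_mem_sector k.2

theorem pairwise_disjoint_spiralCell : Pairwise (Disjoint on spiralCell) := by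
  have hanti : Antitone fun i : ℕ => (grow ^ i) ⁻¹' openTriangle := antitone_nat_of_succ_le
    fun i p hp => by
      rw [mem_preimage, pow_succ'] at hp
      exact preimage_grow_openTriangle_subset hp
  have hcell (k : ℕ × Fin 4) : spiralCell k ⊆
      (grow ^ k.1) ⁻¹' openTriangle \ (grow ^ (k.1 + 1)) ⁻¹' openTriangle := by
    rw [pow_succ']
    exact preimage_mono (sector_subset_sdiff k.2)
  rintro ⟨i, j⟩ ⟨k, l⟩ hne
  rcases eq_or_ne i k with rfl | hik
  · exact (pairwise_disjoint_sector fun hjl => hne (Prod.ext rfl hjl)).preimage _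
  · exact (pairwise_disjoint_sdiff_succ hanti hik).mono (hcell _) (hcell _)

theorem openSegment_subset_spiralCell {i : ℕ} {j : Fin 4} {p q : ℝ × ℝ}
    (h : openSegment ℝ ((grow ^ i) p) ((grow ^ i) q) ⊆ sector j) :
    openSegment ℝ p q ⊆ spiralCell (i, j) :=
  image_subset_iff.1 <| (image_openSegment ℝ (grow ^ i) p q).trans_subset h

theorem openSegment_spiralPoint_subset (i : ℕ) {d : Fin 4} (hd : d ≠ 0) :
    openSegment ℝ (spiralPoint (i, 0)) (spiralPoint (i + d, 0)) ⊆ spiralCell (i + d, 0) ∧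
      openSegment ℝ (spiralPoint (i, 0)) (spiralPoint (i + d, d)) ⊆ spiralCell (i + d, d) ∧
        openSegment ℝ (spiralPoint (i + d, 0)) (spiralPoint (i + d, d)) ⊆
          spiralCell (i + d, d) := by
  obtain ⟨hpath, hlast, hfirst⟩ := openSegment_gadget_subset d hd
  have hgrow (j : Fin 4) : (grow ^ (i + (d : ℕ))) (spiralPoint (i + d, j)) = gadget j :=
    grow_pow_add_shrink_pow (i + d) 0 _
  have hgrow₀ : (grow ^ (i + (d : ℕ))) (spiralPoint (i, 0)) = (grow ^ (d : ℕ)) (gadget 0) :=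
    grow_pow_add_shrink_pow i d _
  refine ⟨openSegment_subset_spiralCell ?_, openSegment_subset_spiralCell ?_,
    openSegment_subset_spiralCell ?_⟩ <;> rw [hgrow, openSegment_symm]
  exacts [by rwa [hgrow₀], by rwa [hgrow₀], by rwa [hgrow]]

theorem isPlanarDrawing_spiralPoint (n : ℕ) : IsPlanarDrawing (withEdgeApexes (pathCube n))
    (spiralPoint ∘ Prod.map Fin.val id ∘ apexIndex) := by
  have hinj : Function.Injective (Prod.map Fin.val id ∘ apexIndex (n := n)) :=
    (Fin.val_injective.prodMap Function.injective_id).comp apexIndex_injective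
  refine isPlanarDrawing_of_cells (cell := spiralCell ∘ Prod.map Fin.val id ∘ apexIndex)
    (pairwise_disjoint_spiralCell.comp_of_injective hinj)
    (fun v => spiralPoint_mem_spiralCell _) fun e he => ?_
  rcases exists_eq_of_mem_edgeSet_withEdgeApexes he with ⟨f, rfl⟩ | ⟨f, v, hv, rfl⟩ <;>
    obtain ⟨i, j, d, hd, hj, hf, hindex⟩ := exists_apexIndex_inr_eq f <;>
    obtain ⟨hpath, hfirst, hlast⟩ := openSegment_spiralPoint_subset i hd <;>
    rw [← hj] at hpath hfirst hlast
  · rw [hf]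
    exact ⟨.inl j, by simp, hpath⟩
  · refine ⟨.inr f, by simp, ?_⟩
    rw [hf, Sym2.mem_iff] at hv
    simp only [edgeSeg, Sym2.lift_mk, Function.comp_apply, hindex]
    rcases hv with rfl | rfl
    exacts [hfirst, hlast]

/-- Quadratic area is worst-case optimal for IC-planar straight-line
grid drawings: there is a constant `c > 0` such that for every `n ≥ 6` there is a graph
with between `n` and `4n` vertices admitting an IC-planar straight-line drawing, all of
whose IC-planar straight-line grid drawings have bounding box of area at least `c·n²`. -/
theorem icplanar_grid_drawing_quadratic_area_lower_bound :
    ∃ c : ℝ, 0 < c ∧ ∀ n : ℕ, 6 ≤ n →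
      ∃ (V : Type) (inst : Fintype V) (G : SimpleGraph V),
        n ≤ @Fintype.card V inst ∧ @Fintype.card V inst ≤ 4 * n ∧
        (∃ ρ : V → ℝ × ℝ, IsICPlanarDrawing G ρ) ∧
        ∀ ρ : V → ℝ × ℝ, IsICPlanarDrawing G ρ → IsGridDrawing ρ →
          c * (n : ℝ) ^ 2 ≤
            (sSup (Set.range fun v => (ρ v).1) - sInf (Set.range fun v => (ρ v).1)) *
            (sSup (Set.range fun v => (ρ v).2) - sInf (Set.range fun v => (ρ v).2)) := by
  refine ⟨1 / 81, by norm_num, fun n hn => ?_⟩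
  have : NeZero n := ⟨by omega⟩
  have vertices : Fintype (Fin n ⊕ (pathCube n).edgeSet) := Fintype.ofFinite _
  refine ⟨_, vertices, withEdgeApexes (pathCube n), ?_, card_withEdgeApexes_pathCube_le,
    ⟨_, (isPlanarDrawing_spiralPoint n).isICPlanarDrawing⟩, fun ρ hρ hgrid => ?_⟩
  · simpa using Fintype.card_le_of_injective (α := Fin n) Sum.inl Sum.inl_injective
  have hwidth : n ≤ 9 * (sSup (range fun v => (ρ v).1) - sInf (range fun v => (ρ v).1)) :=
    hρ.le_nine_mul_sSup_sub_sInf (isCubedPath_pathCube n) hn (f := LinearMap.fst ℝ ℝ ℝ)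
      isOpenMap_fst fun v => (hgrid v).imp fun k ⟨_, hk⟩ => congrArg Prod.fst hk
  have hheight : n ≤ 9 * (sSup (range fun v => (ρ v).2) - sInf (range fun v => (ρ v).2)) :=
    hρ.le_nine_mul_sSup_sub_sInf (isCubedPath_pathCube n) hn (f := LinearMap.snd ℝ ℝ ℝ)
      isOpenMap_snd fun v => let ⟨_, k, hk⟩ := hgrid v; ⟨k, congrArg Prod.snd hk⟩
  have harea := mul_le_mul hwidth hheight n.cast_nonneg (n.cast_nonneg.trans hwidth)
  linarith
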